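/- arXiv:2510.23903 — 3 statements merged into one kernel-verified Lean document; each statement's English description precedes it below -/
import Mathlib

section
/- Let n be a positive integer and 0 ≤ i ≤ ⌊n/2⌋. The number of pairs (S,T) of disjoint i-element subsets of {1,...,n} such that, for every r ∈ {1,...,i}, the r-th largest element of T is smaller than the r-th largest element of S, equals C(n,2i) · (1/(i+1))·C(2i,i); equivalently, (i+1) times this number equals C(n,i)·C(n−i,i). -/
open Finset

/-- Pairs with the ballot (prefix) condition. -/
def ballotSet (n a b : ℕ) : Finset (Finset ℕ × Finset ℕ) :=
  ((Icc 1 n).powerset ×ˢ (Icc 1 n).powerset).filter (fun q =>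
    q.1.card = a ∧ q.2.card = b ∧ Disjoint q.1 q.2 ∧
      ∀ m, m ≤ n → (q.1.filter (· ≤ m)).card ≤ (q.2.filter (· ≤ m)).card)

theorem mem_ballotSet {n a b : ℕ} {q : Finset ℕ × Finset ℕ} :
    q ∈ ballotSet n a b ↔ q.1 ⊆ Icc 1 n ∧ q.2 ⊆ Icc 1 n ∧
    q.1.card = a ∧ q.2.card = b ∧ Disjoint q.1 q.2 ∧
      ∀ m, m ≤ n → (q.1.filter (· ≤ m)).card ≤ (q.2.filter (· ≤ m)).card := by
  simp [ballotSet, and_assoc]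

theorem filter_le_self {n m : ℕ} {S : Finset ℕ} (h : S ⊆ Icc 1 n) (hm : n ≤ m) :
    S.filter (· ≤ m) = S := by
  apply filter_true_of_mem
  intro x hx
  have := mem_Icc.1 (h hx)
  omega

theorem filter_le_erase {n m : ℕ} (S : Finset ℕ) (hm : m ≤ n) :
    (S.erase (n+1)).filter (· ≤ m) = S.filter (· ≤ m) := by
  ext x
  simp only [mem_filter, mem_erase]
  constructor
  · rintro ⟨⟨_, h⟩, h2⟩
    exact ⟨h, h2⟩
  · rintro ⟨h, h2⟩
    exact ⟨⟨by omega, h⟩, h2⟩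

theorem filter_le_insert {n m : ℕ} (S : Finset ℕ) (hm : m ≤ n) :
    (insert (n+1) S).filter (· ≤ m) = S.filter (· ≤ m) := by
  rw [filter_insert, if_neg (by omega)]

theorem sub_of_notMem {n : ℕ} {S : Finset ℕ} (h : S ⊆ Icc 1 (n+1)) (hS : n+1 ∉ S) :
    S ⊆ Icc 1 n := by
  intro x hx
  have h1 := mem_Icc.1 (h hx)
  have : x ≠ n+1 := by
    rintro rfl
    exact hS hx
  exact mem_Icc.2 (by omega)

theorem notMem_of_sub {n : ℕ} {S : Finset ℕ} (h : S ⊆ Icc 1 n) : n+1 ∉ S := by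
  intro hx
  have := mem_Icc.1 (h hx)
  omega

theorem sub_succ {n : ℕ} {S : Finset ℕ} (h : S ⊆ Icc 1 n) : S ⊆ Icc 1 (n+1) :=
  h.trans (Icc_subset_Icc_right (by omega))

theorem insert_sub_succ {n : ℕ} {S : Finset ℕ} (h : S ⊆ Icc 1 n) :
    insert (n+1) S ⊆ Icc 1 (n+1) :=
  insert_subset (mem_Icc.2 (by omega)) (sub_succ h)

theorem erase_sub {n : ℕ} {S : Finset ℕ} (h : S ⊆ Icc 1 (n+1)) :
    S.erase (n+1) ⊆ Icc 1 n :=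
  sub_of_notMem ((erase_subset _ _).trans h) (notMem_erase _ _)

theorem ballot_le {n a b : ℕ} {q : Finset ℕ × Finset ℕ} (h : q ∈ ballotSet n a b) : a ≤ b := by
  obtain ⟨h1, h2, h3, h4, h5, h6⟩ := mem_ballotSet.1 h
  have := h6 n le_rfl
  rwa [filter_le_self h1 le_rfl, filter_le_self h2 le_rfl, h3, h4] at this

theorem piece0 (n a b : ℕ) :
    (ballotSet (n+1) a b).filter (fun q => n+1 ∉ q.1 ∧ n+1 ∉ q.2) = ballotSet n a b := by
  ext q
  rw [mem_filter]
  constructor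
  · rintro ⟨h, k1, k2⟩
    obtain ⟨h1, h2, h3, h4, h5, h6⟩ := mem_ballotSet.1 h
    exact mem_ballotSet.2 ⟨sub_of_notMem h1 k1, sub_of_notMem h2 k2, h3, h4, h5,
      fun m hm => h6 m (by omega)⟩
  · intro h
    have hab := ballot_le h
    obtain ⟨h1, h2, h3, h4, h5, h6⟩ := mem_ballotSet.1 h
    refine ⟨mem_ballotSet.2 ⟨sub_succ h1, sub_succ h2, h3, h4, h5, fun m hm => ?_⟩,
      notMem_of_sub h1, notMem_of_sub h2⟩
    by_cases hmn : m ≤ n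
    · exact h6 m hmn
    · rw [filter_le_self h1 (by omega), filter_le_self h2 (by omega)]
      omega

theorem piece1 (n a b : ℕ) (hab : a + 1 ≤ b) :
    ((ballotSet (n+1) (a+1) b).filter (fun q => n+1 ∈ q.1)).card = (ballotSet n a b).card := by
  refine card_bij' (fun q _ => (q.1.erase (n+1), q.2)) (fun q _ => (insert (n+1) q.1, q.2))
    ?_ ?_ ?_ ?_
  · intro q hq
    obtain ⟨h, k⟩ := mem_filter.1 hq
    obtain ⟨h1, h2, h3, h4, h5, h6⟩ := mem_ballotSet.1 h
    refine mem_ballotSet.2 ⟨erase_sub h1, sub_of_notMem h2 (disjoint_left.1 h5 k), ?_, h4,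
      h5.mono_left (erase_subset _ _), fun m hm => ?_⟩
    · rw [card_erase_of_mem k, h3]; rfl
    · rw [filter_le_erase _ hm]
      exact h6 m (by omega)
  · intro q h
    obtain ⟨h1, h2, h3, h4, h5, h6⟩ := mem_ballotSet.1 h
    have hc : (insert (n+1) q.1).card = a + 1 := by
      rw [card_insert_of_notMem (notMem_of_sub h1), h3]
    refine mem_filter.2 ⟨mem_ballotSet.2 ⟨insert_sub_succ h1, sub_succ h2, hc, h4,
      disjoint_insert_left.2 ⟨notMem_of_sub h2, h5⟩, fun m hm => ?_⟩, mem_insert_self _ _⟩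
    by_cases hmn : m ≤ n
    · rw [filter_le_insert _ hmn]
      exact h6 m hmn
    · rw [filter_le_self (insert_sub_succ h1) (by omega), filter_le_self h2 (by omega), hc, h4]
      exact hab
  · intro q hq
    obtain ⟨h, k⟩ := mem_filter.1 hq
    simp [insert_erase k]
  · intro q h
    have := notMem_of_sub (mem_ballotSet.1 h).1
    simp [erase_insert this]

theorem piece2 (n a b : ℕ) :
    ((ballotSet (n+1) a (b+1)).filter (fun q => n+1 ∈ q.2)).card = (ballotSet n a b).card := by
  refine card_bij' (fun q _ => (q.1, q.2.erase (n+1))) (fun q _ => (q.1, insert (n+1) q.2))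
    ?_ ?_ ?_ ?_
  · intro q hq
    obtain ⟨h, k⟩ := mem_filter.1 hq
    obtain ⟨h1, h2, h3, h4, h5, h6⟩ := mem_ballotSet.1 h
    refine mem_ballotSet.2 ⟨sub_of_notMem h1 (disjoint_right.1 h5 k), erase_sub h2, h3, ?_,
      h5.mono_right (erase_subset _ _), fun m hm => ?_⟩
    · rw [card_erase_of_mem k, h4]; rfl
    · rw [filter_le_erase _ hm]
      exact h6 m (by omega)
  · intro q h
    have hab := ballot_le h
    obtain ⟨h1, h2, h3, h4, h5, h6⟩ := mem_ballotSet.1 h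
    have hc : (insert (n+1) q.2).card = b + 1 := by
      rw [card_insert_of_notMem (notMem_of_sub h2), h4]
    refine mem_filter.2 ⟨mem_ballotSet.2 ⟨sub_succ h1, insert_sub_succ h2, h3, hc,
      disjoint_insert_right.2 ⟨notMem_of_sub h1, h5⟩, fun m hm => ?_⟩, mem_insert_self _ _⟩
    by_cases hmn : m ≤ n
    · rw [filter_le_insert _ hmn]
      exact h6 m hmn
    · rw [filter_le_self (insert_sub_succ h2) (by omega), filter_le_self h1 (by omega), hc, h3]
      omega
  · intro q hq
    obtain ⟨h, k⟩ := mem_filter.1 hq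
    simp [insert_erase k]
  · intro q h
    have := notMem_of_sub (mem_ballotSet.1 h).2.1
    simp [erase_insert this]

theorem split3 (n a b : ℕ) : (ballotSet (n+1) a b).card = (ballotSet n a b).card
    + ((ballotSet (n+1) a b).filter (fun q => n+1 ∈ q.1)).card
    + ((ballotSet (n+1) a b).filter (fun q => n+1 ∈ q.2)).card := by
  rw [← piece0 n a b, card_filter, card_filter, card_filter, card_eq_sum_ones,
    ← sum_add_distrib, ← sum_add_distrib]
  apply sum_congr rfl
  intro q hq
  have hd := (mem_ballotSet.1 hq).2.2.2.2.1
  have : n+1 ∈ q.1 → n+1 ∉ q.2 := fun h => disjoint_left.1 hd h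
  by_cases h1 : n+1 ∈ q.1 <;> by_cases h2 : n+1 ∈ q.2 <;> simp_all

theorem piece1_zero (n b : ℕ) :
    (ballotSet (n+1) 0 b).filter (fun q => n+1 ∈ q.1) = ∅ := by
  apply filter_false_of_mem
  intro q hq h
  have := card_eq_zero.1 (mem_ballotSet.1 hq).2.2.1
  simp [this] at h

theorem piece2_zero (n a : ℕ) :
    (ballotSet (n+1) a 0).filter (fun q => n+1 ∈ q.2) = ∅ := by
  apply filter_false_of_mem
  intro q hq h
  have := card_eq_zero.1 (mem_ballotSet.1 hq).2.2.2.1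
  simp [this] at h

/-- Ballot numbers. -/
def ballotNum : ℕ → ℕ → ℤ
  | 0, _ => 1
  | a+1, b => ((a+1+b).choose (a+1) : ℤ) - ((a+1+b).choose a : ℤ)

theorem ballotNum_rec (a b : ℕ) :
    ballotNum (a+1) (b+1) = ballotNum a (b+1) + ballotNum (a+1) b := by
  cases a with
  | zero => simp [ballotNum]; ring
  | succ k =>
    simp only [ballotNum]
    have e1 : k+1+1+(b+1) = (k+1+1+b)+1 := by ring
    have e2 : k+1+(b+1) = k+1+1+b := by ring
    rw [e1, e2, Nat.choose_succ_succ (k+1+1+b) (k+1), Nat.choose_succ_succ (k+1+1+b) k]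
    push_cast
    ring

theorem ballotNum_diag (a : ℕ) : ballotNum (a+1) a = 0 := by
  have := Nat.choose_symm_of_eq_add (show a+1+a = (a+1) + a from rfl)
  simp [ballotNum, this]

theorem ballot_empty {n a b : ℕ} (h : b < a) : (ballotSet n a b).card = 0 := by
  rw [card_eq_zero, eq_empty_iff_forall_notMem]
  intro q hq
  have := ballot_le hq
  omega

theorem ballot_card (n : ℕ) : ∀ a b : ℕ, a ≤ b + 1 →
    ((ballotSet n a b).card : ℤ) = n.choose (a+b) * ballotNum a b := by
  induction n with
  | zero =>
    intro a b hab
    rcases Nat.eq_zero_or_pos (a+b) with h | h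
    · obtain ⟨rfl, rfl⟩ : a = 0 ∧ b = 0 := by omega
      have : ballotSet 0 0 0 = {(∅, ∅)} := by
        ext ⟨s, t⟩
        rw [mem_ballotSet]
        simp only [mem_singleton, Prod.mk.injEq]
        constructor
        · rintro ⟨_, _, h3, h4, _⟩
          exact ⟨card_eq_zero.1 h3, card_eq_zero.1 h4⟩
        · rintro ⟨rfl, rfl⟩
          simp
      simp [this, ballotNum]
    · have : ballotSet 0 a b = ∅ := by
        rw [eq_empty_iff_forall_notMem]
        intro q hq
        obtain ⟨h1, h2, h3, h4, _⟩ := mem_ballotSet.1 hq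
        have := card_le_card h1
        have := card_le_card h2
        simp at *
        simp_all
      rw [this, Nat.choose_eq_zero_of_lt h]
      simp
  | succ n ih =>
    intro a b hab
    rcases Nat.eq_or_lt_of_le hab with rfl | hlt
    · rw [ballot_empty (by omega), ballotNum_diag]
      simp
    · rw [split3]
      cases a with
      | zero =>
        rw [piece1_zero]
        cases b with
        | zero =>
          rw [piece2_zero]
          have := ih 0 0 (by omega)
          simp at this ⊢
          exact this
        | succ b =>
          rw [piece2]
          have h1 := ih 0 (b+1) (by omega)
          have h2 := ih 0 b (by omega)
          simp only [ballotNum, zero_add] at h1 h2 ⊢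
          push_cast
          rw [h1, h2, Nat.choose_succ_succ]
          push_cast
          simp
          ring
      | succ a =>
        obtain ⟨b, rfl⟩ : ∃ c, b = c + 1 := ⟨b-1, by omega⟩
        rw [piece1 _ _ _ (by omega), piece2]
        have h1 := ih (a+1) (b+1) (by omega)
        have h2 := ih a (b+1) (by omega)
        have h3 := ih (a+1) b (by omega)
        push_cast
        rw [h1, h2, h3]
        have e1 : a+1+(b+1) = (a+b+1)+1 := by ring
        have e2 : a+(b+1) = a+b+1 := by ring
        have e3 : a+1+b = a+b+1 := by ring
        rw [e1, e2, e3, Nat.choose_succ_succ n (a+b+1), ballotNum_rec]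
        push_cast
        ring

theorem ballotNum_catalan (i : ℕ) : ((i:ℤ)+1) * ballotNum i i = (2*i).choose i := by
  cases i with
  | zero => simp [ballotNum]
  | succ k =>
    have h := Nat.choose_succ_right_eq (k+1+(k+1)) k
    have e : k+1+(k+1) - k = k+2 := by omega
    rw [e] at h
    have h' : (((k+1+(k+1)).choose (k+1) : ℕ) : ℤ) * (k+1) = ((k+1+(k+1)).choose k : ℕ) * (k+2) := by
      exact_mod_cast h
    simp only [ballotNum]
    rw [two_mul]
    push_cast
    linarith

theorem list_getD_iff (l : List ℕ) (hl : l.Pairwise (· ≥ ·)) (m : ℕ) : ∀ j : ℕ,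
    m < l.getD j 0 ↔ j < l.countP (fun x => decide (m < x)) := by
  induction l with
  | nil => simp
  | cons x l ih =>
    obtain ⟨hx, hl'⟩ := List.pairwise_cons.1 hl
    have ih := ih hl'
    intro j
    by_cases hm : m < x
    · rw [List.countP_cons_of_pos (by simpa using hm)]
      cases j with
      | zero => simp [hm]
      | succ j => rw [List.getD_cons_succ, ih j]; omega
    · have h0 : l.countP (fun x => decide (m < x)) = 0 := by
        rw [List.countP_eq_zero]
        intro y hy
        have := hx y hy
        simp
        omega
      rw [List.countP_cons_of_neg (by simpa using hm), h0]
      cases j with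
      | zero => simpa using hm
      | succ j =>
        have := ih j
        rw [h0] at this
        simpa using this

theorem sort_getD_iff (S : Finset ℕ) (m j : ℕ) :
    m < (S.sort (· ≥ ·)).getD j 0 ↔ j < (S.filter (m < ·)).card := by
  rw [list_getD_iff _ (S.pairwise_sort _)]
  have : (S.sort (· ≥ ·)).countP (fun x => decide (m < x)) = (S.filter (m < ·)).card := by
    rw [← Multiset.coe_countP, Finset.sort_eq, Multiset.countP_eq_card_filter]
    rfl
  rw [this]

theorem card_split (S : Finset ℕ) (m : ℕ) :
    (S.filter (· ≤ m)).card + (S.filter (m < ·)).card = S.card := by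
  have := card_filter_add_card_filter_not (s := S) (· ≤ m)
  simpa using this

theorem getD_mem_sort (S : Finset ℕ) (j : ℕ) (h : j < S.card) :
    (S.sort (· ≥ ·)).getD j 0 ∈ S := by
  have hl : j < (S.sort (· ≥ ·)).length := by simpa using h
  rw [List.getD_eq_getElem _ _ hl]
  exact (Finset.mem_sort _).1 (List.getElem_mem hl)

theorem dominated_iff (n i : ℕ) (S T : Finset ℕ) (hS : S ⊆ Icc 1 n) (hT : T ⊆ Icc 1 n)
    (cS : S.card = i) (cT : T.card = i) (hd : Disjoint S T) :
    (∀ r, 1 ≤ r → r ≤ i → (T.sort (· ≥ ·)).getD (r - 1) 0 < (S.sort (· ≥ ·)).getD (r - 1) 0) ↔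
    ∀ m, m ≤ n → (S.filter (· ≤ m)).card ≤ (T.filter (· ≤ m)).card := by
  constructor
  · intro h m _
    have s1 := card_split S m
    have s2 := card_split T m
    by_contra hc
    have hj := (sort_getD_iff T m ((T.filter (m < ·)).card - 1)).2 (by omega)
    have := h (T.filter (m < ·)).card (by omega) (by omega)
    have := (sort_getD_iff S m ((T.filter (m < ·)).card - 1)).1 (by omega)
    omega
  · intro h r hr hri
    have mT := getD_mem_sort T (r-1) (by omega)
    have mS := getD_mem_sort S (r-1) (by omega)
    generalize hx : (T.sort (· ≥ ·)).getD (r - 1) 0 = x at *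
    generalize hy : (S.sort (· ≥ ·)).getD (r - 1) 0 = y at *
    have hxy : x ≠ y := by
      rintro rfl
      exact disjoint_left.1 hd mS mT
    have hxn := mem_Icc.1 (hT mT)
    have h1 := (sort_getD_iff T (x-1) (r-1)).1 (by omega)
    have s1 := card_split S (x-1)
    have s2 := card_split T (x-1)
    have := h (x-1) (by omega)
    have := (sort_getD_iff S (x-1) (r-1)).2 (by omega)
    omega

/-- The number of pairs `(S,T)` of disjoint `i`-element subsets of `[n]` with
the `r`-th largest element of `T` smaller than the `r`-th largest element of
`S` for every `r` equals `C(n,2i)·(1/(i+1))·C(2i,i) = (1/(i+1))·C(n,i)·C(n-i,i)`. -/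
theorem count_dominated_pairs (n : ℕ) (hn : 0 < n) (i : ℕ) (hi : i ≤ n / 2) :
    (i + 1) *
        {q : Finset ℕ × Finset ℕ |
          q.1 ⊆ Finset.Icc 1 n ∧ q.2 ⊆ Finset.Icc 1 n ∧
          q.1.card = i ∧ q.2.card = i ∧ Disjoint q.1 q.2 ∧
          ∀ r, 1 ≤ r → r ≤ i →
            (q.2.sort (· ≥ ·)).getD (r - 1) 0 <
              (q.1.sort (· ≥ ·)).getD (r - 1) 0}.ncard =
        n.choose (2 * i) * (2 * i).choose i ∧
      (i + 1) *
        {q : Finset ℕ × Finset ℕ |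
          q.1 ⊆ Finset.Icc 1 n ∧ q.2 ⊆ Finset.Icc 1 n ∧
          q.1.card = i ∧ q.2.card = i ∧ Disjoint q.1 q.2 ∧
          ∀ r, 1 ≤ r → r ≤ i →
            (q.2.sort (· ≥ ·)).getD (r - 1) 0 <
              (q.1.sort (· ≥ ·)).getD (r - 1) 0}.ncard =
        n.choose i * (n - i).choose i := by
  have hset : {q : Finset ℕ × Finset ℕ |
          q.1 ⊆ Finset.Icc 1 n ∧ q.2 ⊆ Finset.Icc 1 n ∧
          q.1.card = i ∧ q.2.card = i ∧ Disjoint q.1 q.2 ∧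
          ∀ r, 1 ≤ r → r ≤ i →
            (q.2.sort (· ≥ ·)).getD (r - 1) 0 <
              (q.1.sort (· ≥ ·)).getD (r - 1) 0} = (ballotSet n i i : Set _) := by
    ext q
    rw [Finset.mem_coe, mem_ballotSet, Set.mem_ofPred_eq]
    constructor
    · rintro ⟨h1, h2, h3, h4, h5, h6⟩
      exact ⟨h1, h2, h3, h4, h5, (dominated_iff n i _ _ h1 h2 h3 h4 h5).1 h6⟩
    · rintro ⟨h1, h2, h3, h4, h5, h6⟩
      exact ⟨h1, h2, h3, h4, h5, (dominated_iff n i _ _ h1 h2 h3 h4 h5).2 h6⟩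
  rw [hset, Set.ncard_coe_finset]
  have main : (i + 1) * (ballotSet n i i).card = n.choose (2 * i) * (2 * i).choose i := by
    have h1 := ballot_card n i i (by omega)
    have h2 := ballotNum_catalan i
    zify
    rw [h1, ← h2, two_mul]
    ring
  refine ⟨main, main.trans ?_⟩
  have := Nat.choose_mul (n := n) (k := 2*i) (s := i) (by omega)
  rw [this]
  congr 2
  omega
end

section
/- For every n ∈ ℕ, the polynomial identity (with rational coefficients) Σ_{i=0}^{n} (1/(i+1))·C(n,i)·C(n+1,i) t^i = Σ_{i=0}^{⌊n/2⌋} (1/(i+1))·C(n,i)·C(n−i,i) t^i (1+t)^{n−2i} holds, where C(a,b) denotes the binomial coefficient. -/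
open Finset Polynomial

lemma choose_aux1 (m i j : ℕ) :
    m.choose j * (m - j).choose i = m.choose (i + j) * (i + j).choose j := by
  rw [Nat.choose_mul (Nat.le_add_left j i), Nat.add_sub_cancel]

lemma choose_aux2 (n k i : ℕ) (h : i ≤ k) :
    n.choose i * (n - i).choose i * (n - 2 * i).choose (k - i) =
      n.choose k * k.choose i * (n - k).choose i := by
  rw [Nat.choose_mul h, mul_assoc, mul_assoc]
  congr 1
  obtain ⟨j, rfl⟩ := Nat.exists_eq_add_of_le h
  have e1 : i + j - i = j := by omega
  have e2 : n - (i + j) = n - i - j := by omega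
  have e3 : n - 2 * i = n - i - i := by omega
  rw [e1, e2, e3, choose_aux1, choose_aux1, add_comm j i, Nat.choose_symm_add]

lemma vander (n k : ℕ) (h : k ≤ n) :
    ∑ i ∈ range (k + 1), (k + 1).choose (i + 1) * (n - k).choose i = (n + 1).choose k := by
  have e : n + 1 = (n - k) + (k + 1) := by omega
  rw [e, Nat.add_choose_eq, Nat.sum_antidiagonal_eq_sum_range_succ_mk]
  apply sum_congr rfl
  intro i hi
  have hi := mem_range.1 hi
  rw [mul_comm, ← Nat.choose_symm (show i + 1 ≤ k + 1 by omega)]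
  simp

/-- The gamma-expansion of the Narayana polynomial:
`∑_{i=0}^n (1/(i+1))·C(n,i)·C(n+1,i) tⁱ
  = ∑_{i=0}^{⌊n/2⌋} (1/(i+1))·C(n,i)·C(n-i,i) tⁱ (1+t)^{n-2i}`. -/
theorem narayana_gamma (n : ℕ) :
    (∑ i ∈ Finset.range (n + 1),
        Polynomial.C ((n.choose i * (n + 1).choose i : ℚ) / (i + 1)) * X ^ i) =
      ∑ i ∈ Finset.range (n / 2 + 1),
        Polynomial.C ((n.choose i * (n - i).choose i : ℚ) / (i + 1)) * X ^ i *
          (1 + X) ^ (n - 2 * i) := by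
  ext k
  have hL : (∑ i ∈ Finset.range (n + 1),
        Polynomial.C ((n.choose i * (n + 1).choose i : ℚ) / (i + 1)) * X ^ i).coeff k =
        (n.choose k * (n + 1).choose k : ℚ) / (k + 1) := by
    simp only [finset_sum_coeff, coeff_C_mul_X_pow]
    rw [Finset.sum_ite_eq]
    split_ifs with h
    · rfl
    · rw [mem_range, not_lt] at h
      rw [Nat.choose_eq_zero_of_lt (show n < k by omega)]
      simp
  rw [hL]
  set g : ℕ → ℚ := fun i => if i ≤ k then
    (n.choose i * (n - i).choose i : ℚ) / (i + 1) * (n - 2 * i).choose (k - i) else 0 with hg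
  have hR : (∑ i ∈ Finset.range (n / 2 + 1),
        Polynomial.C ((n.choose i * (n - i).choose i : ℚ) / (i + 1)) * X ^ i *
          (1 + X) ^ (n - 2 * i)).coeff k = ∑ i ∈ range (n / 2 + 1), g i := by
    rw [finset_sum_coeff]
    apply sum_congr rfl
    intro i _
    rw [mul_assoc, coeff_C_mul, coeff_X_pow_mul', coeff_one_add_X_pow]
    simp only [hg]
    split_ifs <;> simp
  have h1 : ∑ i ∈ range (n / 2 + 1), g i = ∑ i ∈ range (n + k + 1), g i := by
    apply sum_subset
    · exact range_subset_range.2 (by omega)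
    · intro i _ hi
      rw [mem_range] at hi
      simp only [hg]
      rw [Nat.choose_eq_zero_of_lt (show n - i < i by omega)]
      simp
  have h2 : ∑ i ∈ range (k + 1), g i = ∑ i ∈ range (n + k + 1), g i := by
    apply sum_subset
    · exact range_subset_range.2 (by omega)
    · intro i _ hi
      rw [mem_range] at hi
      simp only [hg]
      rw [if_neg (by omega)]
  rw [hR, h1, ← h2]
  have h3 : ∀ i ∈ range (k + 1), g i = (n.choose k : ℚ) / (k + 1) *
      (((k + 1).choose (i + 1) * (n - k).choose i : ℕ) : ℚ) := by
    intro i hi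
    have hi : i ≤ k := by have := mem_range.1 hi; omega
    simp only [hg]
    rw [if_pos hi]
    have a := choose_aux2 n k i hi
    have b := Nat.add_one_mul_choose_eq k i
    have a' : (n.choose i * (n - i).choose i * (n - 2 * i).choose (k - i) : ℚ) =
      n.choose k * k.choose i * (n - k).choose i := by exact_mod_cast a
    have b' : ((k + 1) * k.choose i : ℚ) = (k + 1).choose (i + 1) * (i + 1) := by
      exact_mod_cast b
    have p : (k + 1 : ℚ) ≠ 0 := by positivity
    have q : (i + 1 : ℚ) ≠ 0 := by positivity
    push_cast
    rw [div_mul_eq_mul_div, div_mul_eq_mul_div, div_eq_div_iff q p, a']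
    linear_combination (n.choose k * (n - k).choose i : ℚ) * b'
  rw [sum_congr rfl h3, ← mul_sum, ← Nat.cast_sum]
  by_cases h : k ≤ n
  · rw [vander n k h]; ring
  · rw [Nat.choose_eq_zero_of_lt (show n < k by omega)]; simp
end

section
/- Let σ = (r_1,...,r_k) be a composition of a positive integer n with partial sums s_i. The map sending (a_1,...,a_n) ∈ P_σ to the n-tuple (p_1,...,p_n) with p_i = a_1 + ... + a_i if a_i ≥ 1 and p_i = 0 if a_i = 0, is a bijection from P_σ onto H_σ, and it preserves the number of nonzero coordinates; consequently, for every 0 ≤ j ≤ n, h_j(σ) equals the number of elements of H_σ with exactly j nonzero entries. -/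
open Finset Polynomial

/-- `pSum σ i = r₁ + ⋯ + rᵢ`, the `i`-th partial sum of the composition `σ`. -/
def pSum (σ : List ℕ) (i : ℕ) : ℕ := (σ.take i).sum

/-- Membership in the set `P_σ ⊆ ℕⁿ`: the partial sum of the first `s_i`
coordinates is at most `s_i` for every `i ∈ [k]`. -/
def memP (n : ℕ) (σ : List ℕ) (a : Fin n → ℕ) : Prop :=
  ∀ i, 1 ≤ i → i ≤ σ.length →
    (∑ j ∈ Finset.univ.filter (fun j : Fin n => (j : ℕ) < pSum σ i), a j) ≤ pSum σ i

/-- The number of nonzero coordinates of a tuple. -/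
def nonzeroCount {n : ℕ} (a : Fin n → ℕ) : ℕ :=
  (Finset.univ.filter (fun j => a j ≠ 0)).card

/-- `h_i(σ)`: the number of points of `P_σ` with exactly `i` nonzero coordinates. -/
noncomputable def hVec (n : ℕ) (σ : List ℕ) (i : ℕ) : ℕ :=
  {a : Fin n → ℕ | memP n σ a ∧ nonzeroCount a = i}.ncard

/-- Membership in `H_σ`: the nonzero entries appear in strictly increasing order
from left to right, and `p₁, …, p_{s_i} ≤ s_i` for every `i ∈ [k]`. -/
def memH (n : ℕ) (σ : List ℕ) (p : Fin n → ℕ) : Prop :=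
  (∀ j j' : Fin n, j < j' → p j ≠ 0 → p j' ≠ 0 → p j < p j') ∧
  (∀ i, 1 ≤ i → i ≤ σ.length → ∀ j : Fin n, (j : ℕ) < pSum σ i → p j ≤ pSum σ i)

/-- `S(x)`: the set of (1-indexed) positions of the nonzero entries of `x`. -/
def Spos {n : ℕ} (p : Fin n → ℕ) : Finset ℕ :=
  (Finset.univ.filter (fun j : Fin n => p j ≠ 0)).image (fun j : Fin n => (j : ℕ) + 1)

/-- `T(x)`: the set of nonzero entries of `x`. -/
def Tset {n : ℕ} (p : Fin n → ℕ) : Finset ℕ :=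
  (Finset.univ.filter (fun j : Fin n => p j ≠ 0)).image p

/-- The map sending `(a₁, …, a_n)` to `(p₁, …, p_n)` with
`p_i = a₁ + ⋯ + a_i` if `a_i ≥ 1` and `p_i = 0` otherwise. -/
def phiMap (n : ℕ) (a : Fin n → ℕ) : Fin n → ℕ := fun j =>
  if a j = 0 then 0
  else ∑ t ∈ Finset.univ.filter (fun t : Fin n => (t : ℕ) ≤ (j : ℕ)), a t

/-- Prefix sums. -/
def preS {n : ℕ} (a : Fin n → ℕ) (m : ℕ) : ℕ :=
  ∑ t ∈ Finset.univ.filter (fun t : Fin n => (t : ℕ) < m), a t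

/-- Prefix maxima. -/
def preM {n : ℕ} (a : Fin n → ℕ) (m : ℕ) : ℕ :=
  (Finset.univ.filter (fun t : Fin n => (t : ℕ) < m)).sup a

lemma filter_lt_succ {n : ℕ} (j : Fin n) :
    Finset.univ.filter (fun t : Fin n => (t : ℕ) < (j : ℕ) + 1) =
      insert j (Finset.univ.filter (fun t : Fin n => (t : ℕ) < (j : ℕ))) := by
  ext t
  simp only [Finset.mem_filter, Finset.mem_univ, true_and, Finset.mem_insert, Fin.ext_iff]
  omega

lemma preS_succ {n : ℕ} (a : Fin n → ℕ) (j : Fin n) :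
    preS a (j + 1) = preS a j + a j := by
  unfold preS
  rw [filter_lt_succ, Finset.sum_insert (by simp), add_comm]

lemma preM_succ {n : ℕ} (a : Fin n → ℕ) (j : Fin n) :
    preM a (j + 1) = max (a j) (preM a j) := by
  unfold preM
  rw [filter_lt_succ, Finset.sup_insert]

lemma preS_mono {n : ℕ} (a : Fin n → ℕ) {l m : ℕ} (h : l ≤ m) : preS a l ≤ preS a m := by
  unfold preS
  apply Finset.sum_le_sum_of_subset
  intro t
  simp only [Finset.mem_filter, Finset.mem_univ, true_and]
  omega

lemma phiMap_eq {n : ℕ} (a : Fin n → ℕ) (j : Fin n) :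
    phiMap n a j = if a j = 0 then 0 else preS a (j + 1) := by
  simp only [phiMap, preS, Nat.lt_succ_iff]

lemma phiMap_eq_zero {n : ℕ} (a : Fin n → ℕ) (j : Fin n) :
    phiMap n a j = 0 ↔ a j = 0 := by
  rw [phiMap_eq, preS_succ]
  split_ifs with h <;> simp [h]

lemma phiMap_inj (n : ℕ) : Function.Injective (phiMap n) := by
  intro a b hab
  have hz : ∀ j, a j = 0 ↔ b j = 0 := fun j => by
    rw [← phiMap_eq_zero, hab, phiMap_eq_zero]
  have hS : ∀ m, m ≤ n → preS a m = preS b m := by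
    intro m
    induction m with
    | zero => intro _; simp [preS]
    | succ m ih =>
      intro hm
      have h1 := preS_succ a ⟨m, hm⟩
      have h2 := preS_succ b ⟨m, hm⟩
      have h3 := congrFun hab ⟨m, hm⟩
      have h4 := hz ⟨m, hm⟩
      have h5 := ih (by omega)
      rw [phiMap_eq, phiMap_eq] at h3
      simp only at h1 h2 h3
      by_cases h : a ⟨m, hm⟩ = 0
      · have h' := h4.1 h
        omega
      · have h' := fun q => h (h4.2 q)
        rwa [if_neg h, if_neg h'] at h3
  funext j
  have h1 := preS_succ a j
  have h2 := preS_succ b j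
  have h3 := hS j (by omega)
  have h4 := hS (j + 1) (by omega)
  omega

lemma preS_sub {n : ℕ} (p : Fin n → ℕ) (m : ℕ) (hm : m ≤ n) :
    preS (fun j => p j - preM p j) m = preM p m := by
  induction m with
  | zero => simp [preS, preM]
  | succ m ih =>
    have h1 := preS_succ (fun j => p j - preM p j) ⟨m, hm⟩
    have h2 := preM_succ p ⟨m, hm⟩
    have h3 := ih (by omega)
    simp only at h1 h2
    omega

lemma nonzeroCount_phiMap {n : ℕ} (a : Fin n → ℕ) :
    nonzeroCount (phiMap n a) = nonzeroCount a := by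
  simp only [nonzeroCount, ne_eq, phiMap_eq_zero]

lemma phiMap_bijOn_aux (n : ℕ) (σ : List ℕ) (hsum : σ.sum = n) :
    Set.BijOn (phiMap n) {a : Fin n → ℕ | memP n σ a} {p : Fin n → ℕ | memH n σ p} := by
  refine ⟨?_, (phiMap_inj n).injOn, ?_⟩
  · intro a ha
    refine ⟨?_, ?_⟩
    · intro j j' hjj h h'
      have e := preS_mono a (show (j : ℕ) + 1 ≤ j' from hjj)
      rw [ne_eq, phiMap_eq_zero] at h h'
      rw [phiMap_eq, phiMap_eq, if_neg h, if_neg h', preS_succ a j']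
      omega
    · intro i h1 h2 j hj
      have e : preS a (pSum σ i) ≤ pSum σ i := ha i h1 h2
      have e' := preS_mono a (show (j : ℕ) + 1 ≤ pSum σ i from hj)
      rw [phiMap_eq]
      split_ifs <;> omega
  · rintro p ⟨hinc, hb⟩
    refine ⟨fun j => p j - preM p j, ?_, ?_⟩
    · intro i h1 h2
      have hle : pSum σ i ≤ n := by
        have h := List.sum_take_add_sum_drop σ i
        unfold pSum
        omega
      have e := preS_sub p (pSum σ i) hle
      change preS (fun j => p j - preM p j) (pSum σ i) ≤ _
      rw [e]
      apply Finset.sup_le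
      intro t ht
      exact hb i h1 h2 t (by simpa using ht)
    · funext j
      rw [phiMap_eq, preS_sub p _ (by omega), preM_succ]
      by_cases h0 : p j = 0
      · simp [h0]
      · have hlt : preM p j < p j := by
          unfold preM
          rw [Finset.sup_lt_iff (by simpa using Nat.pos_of_ne_zero h0)]
          intro t ht
          by_cases h : p t = 0
          · omega
          · exact hinc t j (by simpa using ht) h h0
        rw [if_neg (by omega), max_eq_left hlt.le]

/-- The map `phiMap` is a bijection from `P_σ` onto `H_σ` preserving the
number of nonzero coordinates; consequently `h_j(σ)` counts the elements of
`H_σ` with exactly `j` nonzero entries. -/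
theorem phiMap_bijOn (n : ℕ) (hn : 0 < n) (σ : List ℕ)
    (hpos : ∀ r ∈ σ, 0 < r) (hsum : σ.sum = n) :
    Set.BijOn (phiMap n) {a : Fin n → ℕ | memP n σ a} {p : Fin n → ℕ | memH n σ p} ∧
      (∀ a : Fin n → ℕ, memP n σ a → nonzeroCount (phiMap n a) = nonzeroCount a) ∧
      (∀ j ≤ n, hVec n σ j =
        {p : Fin n → ℕ | memH n σ p ∧ nonzeroCount p = j}.ncard) := by
  have hB := phiMap_bijOn_aux n σ hsum
  refine ⟨hB, fun a _ => nonzeroCount_phiMap a, ?_⟩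
  intro j _
  unfold hVec
  rw [← Set.ncard_image_of_injective _ (phiMap_inj n)]
  congr 1
  ext p
  constructor
  · rintro ⟨a, ⟨ha, hc⟩, rfl⟩
    exact ⟨hB.mapsTo ha, by rw [nonzeroCount_phiMap, hc]⟩
  · rintro ⟨hp, hc⟩
    obtain ⟨a, ha, rfl⟩ := hB.surjOn hp
    exact ⟨a, ⟨ha, by rw [← hc, nonzeroCount_phiMap]⟩, rfl⟩
end
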